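/- In the hypersurface setting of the context, let φ : S[x] → K[[t]] be an arc in X = V(f) through the closed point such that φ(z_j) = u_j g′(t) for all j = 1,…,d, where the u_j are units of K[[t]] and g′ ∈ K[[t]] has t-adic order L ≥ 1, and assume the restriction φ^{(d)} of φ to S is diagonal-generic for G_X^{(d)}, i.e. ord(G^{(1)}_{X_0,φ^{(d)}}) = L · ord(G_X^{(d)}). If ord(φ) = ord_t(φ(x)), then r_{X,φ}/ord(φ) = ord(G_X^{(d)}) = 1. -/

import Mathlib

open Polynomial
open scoped ENNReal

noncomputable section

namespace NashMult

/-- The `m`-adic order `ν(f)` of an element `f` of a ring: the largest `n` with `f ∈ m ^ n`. -/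
def adicOrder {R : Type*} [CommRing R] (m : Ideal R) (f : R) : ℕ :=
  sSup {n : ℕ | f ∈ m ^ n}

/-- A subalgebra `G ⊆ R[W]` is *graded* if it is spanned by its "monomials", i.e. it is closed
under taking homogeneous components.  This is the condition expressing that `G = ⊕ I_l W^l`
for a family of ideals `I_l` (with `I_0 = R` and `I_i · I_j ⊆ I_{i+j}` automatic). -/
def Graded {R : Type*} [CommRing R] (G : Subalgebra R (Polynomial R)) : Prop :=
  ∀ p ∈ G, ∀ n : ℕ, (C (p.coeff n) * X ^ n : Polynomial R) ∈ G

/-- A *Rees algebra* over `R`: a finitely generated graded subalgebra of `R[W]`. -/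
def IsReesAlgebra {R : Type*} [CommRing R] (G : Subalgebra R (Polynomial R)) : Prop :=
  G.FG ∧ Graded G

/-- The order of (the Rees algebra) `G` at the closed point of the local ring `(R, m)`:
`ord(G) = inf { ν(f)/n : f W^n a homogeneous element of G, n ≥ 1, f ≠ 0 }`
(with value `∞` for the empty infimum). -/
def reesOrder {R : Type*} [CommRing R] (m : Ideal R) (G : Subalgebra R (Polynomial R)) : ℝ≥0∞ :=
  sInf {q : ℝ≥0∞ | ∃ (f : R) (n : ℕ), f ≠ 0 ∧ 1 ≤ n ∧ (C f * X ^ n : Polynomial R) ∈ G ∧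
    q = (adicOrder m f : ℝ≥0∞) / (n : ℝ≥0∞)}

/-- `G = ⊕ I_l W^l` is *differentially closed* relative to a family `D` of derivations if
`I_{l+1} ⊆ I_l` and `D_j (I_l) ⊆ I_{l-1}` for all `l ≥ 1` and all `j`. -/
def DiffClosed {k R ι : Type*} [CommRing k] [CommRing R] [Algebra k R]
    (D : ι → Derivation k R R) (G : Subalgebra R (Polynomial R)) : Prop :=
  (∀ (f : R) (l : ℕ), 1 ≤ l → (C f * X ^ (l + 1) : Polynomial R) ∈ G →
      (C f * X ^ l : Polynomial R) ∈ G) ∧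
  (∀ (f : R) (l : ℕ) (j : ι), (C f * X ^ (l + 1) : Polynomial R) ∈ G →
      (C (D j f) * X ^ l : Polynomial R) ∈ G)

/-- `Diff(M)`: the smallest graded differentially closed subalgebra of `R[W]` containing the
set `M`. -/
def diffClosure {k R ι : Type*} [CommRing k] [CommRing R] [Algebra k R]
    (D : ι → Derivation k R R) (M : Set (Polynomial R)) : Subalgebra R (Polynomial R) :=
  sInf {G : Subalgebra R (Polynomial R) | M ⊆ ↑G ∧ Graded G ∧ DiffClosed D G}

/-- The image `ψ(G)` of a Rees algebra `G` over `R` under a homomorphism (arc) `ψ : R → K⟦t⟧`: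
the Rees algebra over `K⟦t⟧` generated by all `ψ(g) W^l` for `g W^l` a homogeneous element of
`G` with `ψ(g) ≠ 0`. -/
def arcImage {R A : Type*} [CommRing R] [CommRing A] (ψ : R → A)
    (G : Subalgebra R (Polynomial R)) : Subalgebra A (Polynomial A) :=
  Algebra.adjoin A {p : Polynomial A | ∃ (g : R) (l : ℕ),
    (C g * X ^ l : Polynomial R) ∈ G ∧ ψ g ≠ 0 ∧ p = C (ψ g) * X ^ l}

/-- The order `ord(ψ)` of an arc `ψ : R → K⟦t⟧`: the largest `n` such that
`ψ(m) ⊆ t^n` (`t` being the ideal `tI`). -/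
def homOrd {R A : Type*} [CommRing R] [CommRing A] (m : Ideal R) (tI : Ideal A)
    (ψ : R → A) : ℕ :=
  sSup {n : ℕ | ∀ s ∈ m, ψ s ∈ tI ^ n}

/-- The maximal ideal `(t)` of `K⟦t⟧`. -/
def tId (K : Type*) [CommRing K] : Ideal (PowerSeries K) :=
  Ideal.span {(PowerSeries.X : PowerSeries K)}

/-- The `t`-adic order on `K⟦t⟧`. -/
def tOrd {K : Type*} [CommRing K] (g : PowerSeries K) : ℕ :=
  adicOrder (tId K) g

/-- The family of ideals `I_l` of the graded algebra `G = ⊕ I_l W^l`. -/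
def idealFam {R : Type*} [CommRing R] (G : Subalgebra R (Polynomial R)) (l : ℕ) : Ideal R :=
  Submodule.comap (Polynomial.monomial l : R →ₗ[R] Polynomial R) (Subalgebra.toSubmodule G)

/-- The closed point of the local ring `(R, m)` belongs to the singular locus of
`G = ⊕ I_l W^l`, i.e. `ν(I_l) ≥ l` for all `l ≥ 1`. -/
def SingFam {R : Type*} [CommRing R] (m : Ideal R) (I : ℕ → Ideal R) : Prop :=
  ∀ l : ℕ, 1 ≤ l → I l ≤ m ^ l

/-- The transform `⊕ (I_l · T^{-l}) W^l` of a Rees algebra `⊕ I_l W^l` over a DVR with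
uniformizer `T` (when the closed point lies in the singular locus, `I_l ⊆ (T^l)` and
`I_l · T^{-l} = (I_l : (T^l))`). -/
def transformFam {R : Type*} [CommRing R] (T : R) (I : ℕ → Ideal R) : ℕ → Ideal R :=
  fun l => (I l).colon (Ideal.span {T ^ l})

/-- The persistance: the least number `κ` of transforms needed so that the closed point no
longer lies in the singular locus. -/
def persist {R : Type*} [CommRing R] (m : Ideal R) (T : R)
    (G : Subalgebra R (Polynomial R)) : ℕ :=
  sInf {κ : ℕ | ¬ SingFam m ((transformFam T)^[κ] (idealFam G))}

/-- The set of elements of a ring integral over a subset `s` (monic equation with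
coefficients in `s`). -/
def intClos {A : Type*} [CommRing A] (s : Set A) : Set A :=
  {p : A | ∃ q : Polynomial A, q.Monic ∧ (∀ n, q.coeff n ∈ s) ∧ Polynomial.eval p q = 0}


/-- The monic polynomial `f = x^b + B_{b-2} x^{b-2} + ⋯ + B_1 x + B_0` with coefficients
`B_j = Bc j` (only `j ≤ b - 2` is relevant). -/
def minPolyOf {S : Type*} [CommRing S] (b : ℕ) (Bc : ℕ → S) : Polynomial S :=
  Polynomial.X ^ b + ∑ j ∈ Finset.range (b - 1), Polynomial.C (Bc j) * Polynomial.X ^ j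


/-- The maximal ideal `(z_1, …, z_d)` of the polynomial ring `k[z_1, …, z_d]`
(the kernel of evaluation at the origin). -/
def mPoly (k : Type) [Field k] (d : ℕ) : Ideal (MvPolynomial (Fin d) k) :=
  RingHom.ker (MvPolynomial.aeval (fun _ => (0 : k)) : MvPolynomial (Fin d) k →ₐ[k] k)

instance {k : Type} [Field k] {d : ℕ} : (mPoly k d).IsMaximal :=
  RingHom.ker_isMaximal_of_surjective _ (fun a => ⟨MvPolynomial.C a, by simp⟩)

instance {k : Type} [Field k] {d : ℕ} : (mPoly k d).IsPrime :=
  (inferInstance : (mPoly k d).IsMaximal).isPrime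

/-- `IsSLoc k d S` says that `S` is (identified with) the localization of `k[z_1, …, z_d]`
at the maximal ideal `(z_1, …, z_d)`. -/
abbrev IsSLoc (k : Type) [Field k] (d : ℕ) (S : Type) [CommRing S]
    [Algebra (MvPolynomial (Fin d) k) S] : Prop :=
  IsLocalization.AtPrime S (mPoly k d)

/-- The element `z_j` of `S`. -/
def zvar (k : Type) [Field k] (d : ℕ) (S : Type) [CommRing S]
    [Algebra (MvPolynomial (Fin d) k) S] (j : Fin d) : S :=
  algebraMap (MvPolynomial (Fin d) k) S (MvPolynomial.X j)

/-- The maximal ideal `m = (z_1, …, z_d)` of the local ring `S`. -/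
def mS (k : Type) [Field k] (d : ℕ) (S : Type) [CommRing S]
    [Algebra (MvPolynomial (Fin d) k) S] : Ideal S :=
  (mPoly k d).map (algebraMap (MvPolynomial (Fin d) k) S)


variable (k : Type) [Field k] (d : ℕ)
variable (S : Type) [CommRing S] [Algebra (MvPolynomial (Fin d) k) S] [Algebra k S]

/-- The elimination algebra `G_X^{(d)} = Diff(S[B_{b-2} W^2, …, B_0 W^b])` over `S` of the
hypersurface `X = V(f)`, where `f = x^b + B_{b-2} x^{b-2} + ⋯ + B_0`. -/
def hypElim (D : Fin d → Derivation k S S) (b : ℕ) (Bc : ℕ → S) :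
    Subalgebra S (Polynomial S) :=
  diffClosure D {p : Polynomial S | ∃ i ≤ b - 2,
    p = Polynomial.C (Bc i) * Polynomial.X ^ (b - i)}

/-- An arc in the hypersurface `X = V(f)` through the closed point `ξ`: a `k`-algebra
homomorphism `φ : S[x] → K⟦t⟧` with `φ(f) = 0` and `φ(x), φ(z_1), …, φ(z_d) ∈ (t)`,
with `φ(x)` and all `φ(z_j)` nonzero. -/
def IsHypArc (b : ℕ) (Bc : ℕ → S) {K : Type} [Field K] [Algebra k K]
    (φ : Polynomial S →ₐ[k] PowerSeries K) : Prop :=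
  φ (minPolyOf b Bc) = 0 ∧
  φ Polynomial.X ∈ tId K ∧ (∀ j, φ (Polynomial.C (zvar k d S j)) ∈ tId K) ∧
  φ Polynomial.X ≠ 0 ∧ (∀ j, φ (Polynomial.C (zvar k d S j)) ≠ 0)

/-- The order of the arc `φ`: `ord(φ) = min {α_0, α_1, …, α_d}`, where
`α_0 = ord_t φ(x)` and `α_j = ord_t φ(z_j)`. -/
def hypArcOrd {K : Type} [Field K] [Algebra k K]
    (φ : Polynomial S →ₐ[k] PowerSeries K) : ℕ :=
  sInf (insert (tOrd (φ Polynomial.X))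
    (Set.range fun j => tOrd (φ (Polynomial.C (zvar k d S j)))))

/-- The contact algebra `G^{(1)}_{X_0,φ}`: the Rees algebra over `K⟦t⟧` generated by
`t^{α_0} W` together with all `φ(g) W^l`, for `g W^l` a homogeneous element of `G_X^{(d)}`
with `φ(g) ≠ 0`. -/
def hypContact (D : Fin d → Derivation k S S) (b : ℕ) (Bc : ℕ → S)
    {K : Type} [Field K] [Algebra k K] (φ : Polynomial S →ₐ[k] PowerSeries K) :
    Subalgebra (PowerSeries K) (Polynomial (PowerSeries K)) :=
  Algebra.adjoin (PowerSeries K)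
    (insert
      (Polynomial.C ((PowerSeries.X : PowerSeries K) ^ tOrd (φ Polynomial.X)) * Polynomial.X)
      {p : Polynomial (PowerSeries K) | ∃ (g : S) (l : ℕ),
        (Polynomial.C g * Polynomial.X ^ l : Polynomial S) ∈ hypElim k d S D b Bc ∧
        φ (Polynomial.C g) ≠ 0 ∧
        p = Polynomial.C (φ (Polynomial.C g)) * Polynomial.X ^ l})


theorem le_adicOrder_iff {R : Type*} [CommRing R] [IsDomain R] [IsNoetherianRing R]
    (m : Ideal R) (hm : m ≠ ⊤) {f : R} (hf : f ≠ 0) (n : ℕ) :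
    n ≤ adicOrder m f ↔ f ∈ m ^ n := by
  have hb : BddAbove {n : ℕ | f ∈ m ^ n} := by
    by_contra hcon
    apply hf
    have h := Ideal.iInf_pow_eq_bot_of_isDomain m hm
    rw [← Ideal.mem_bot, ← h, Ideal.mem_iInf]
    intro i
    rw [not_bddAbove_iff] at hcon
    obtain ⟨y, hy, hi⟩ := hcon i
    exact Ideal.pow_le_pow_right hi.le hy
  have hne : {n : ℕ | f ∈ m ^ n}.Nonempty := ⟨0, by simp⟩
  constructor
  · intro h
    exact Ideal.pow_le_pow_right h (Nat.sSup_mem hne hb)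
  · intro h
    exact le_csSup hb h

theorem tId_ne_top (K : Type) [Field K] : tId K ≠ ⊤ := by
  intro h
  rw [tId, Ideal.span_singleton_eq_top] at h
  exact PowerSeries.X_prime.not_unit h

theorem mem_tId_pow {K : Type} [Field K] (n : ℕ) (g : PowerSeries K) :
    g ∈ tId K ^ n ↔ (PowerSeries.X : PowerSeries K) ^ n ∣ g := by
  rw [tId, Ideal.span_singleton_pow, Ideal.mem_span_singleton]

theorem le_tOrd_iff {K : Type} [Field K] {g : PowerSeries K} (hg : g ≠ 0) (n : ℕ) :
    n ≤ tOrd g ↔ (PowerSeries.X : PowerSeries K) ^ n ∣ g := by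
  rw [tOrd, le_adicOrder_iff _ (tId_ne_top K) hg, mem_tId_pow]

theorem der_pow {k R : Type*} [CommRing k] [CommRing R] [Algebra k R]
    (D : Derivation k R R) (m : Ideal R) (l : ℕ) :
    ∀ f ∈ m ^ (l + 1), D f ∈ m ^ l := by
  induction l with
  | zero => intro f _; simp
  | succ l ih =>
    intro f hf
    rw [pow_succ] at hf
    refine Submodule.mul_induction_on hf ?_ ?_
    · intro x hx y hy
      rw [Derivation.leibniz, smul_eq_mul, smul_eq_mul]
      refine add_mem (Ideal.mul_mem_right _ _ hx) ?_
      rw [pow_succ, mul_comm y]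
      exact Ideal.mul_mem_mul (ih x hx) hy
    · intro x y hx hy
      rw [map_add]
      exact add_mem hx hy

theorem CX_mem_rees {R : Type*} [CommRing R] (m : Ideal R) (f : R) (n : ℕ) :
    (C f * X ^ n : Polynomial R) ∈ reesAlgebra m ↔ f ∈ m ^ n := by
  rw [mem_reesAlgebra_iff]
  constructor
  · intro h
    simpa using h n
  · intro h i
    rw [Polynomial.coeff_C_mul_X_pow]
    split_ifs with hi
    · rwa [hi]
    · exact zero_mem _

theorem graded_rees {R : Type*} [CommRing R] (m : Ideal R) : Graded (reesAlgebra m) := by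
  intro p hp n
  rw [CX_mem_rees]
  exact (mem_reesAlgebra_iff _ _).1 hp n

theorem diffClosed_rees {k R ι : Type*} [CommRing k] [CommRing R] [Algebra k R]
    (D : ι → Derivation k R R) (m : Ideal R) : DiffClosed D (reesAlgebra m) := by
  constructor
  · intro f l _ h
    rw [CX_mem_rees] at h ⊢
    exact Ideal.pow_le_pow_right (Nat.le_succ l) h
  · intro f l j h
    rw [CX_mem_rees] at h ⊢
    exact der_pow _ _ _ _ h

theorem le_reesOrder {R : Type*} [CommRing R] [IsDomain R] [IsNoetherianRing R]
    (m : Ideal R) (hm : m ≠ ⊤) (L : ℕ) (G : Subalgebra R (Polynomial R))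
    (hG : G ≤ reesAlgebra (m ^ L)) : (L : ℝ≥0∞) ≤ reesOrder m G := by
  apply le_sInf
  rintro q ⟨f, n, hf, hn, hfn, rfl⟩
  have h := (CX_mem_rees _ _ _).1 (hG hfn)
  rw [← pow_mul, ← le_adicOrder_iff m hm hf] at h
  rw [ENNReal.le_div_iff_mul_le (by left; simp; omega) (by left; simp)]
  exact_mod_cast h

theorem mPoly_le (k : Type) [Field k] (d : ℕ) {A : Type*} [CommRing A]
    (ψ : MvPolynomial (Fin d) k →+* A) (J : Ideal A) (h : ∀ j, ψ (MvPolynomial.X j) ∈ J) :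
    mPoly k d ≤ J.comap ψ := by
  have key : ∀ p : MvPolynomial (Fin d) k,
      ψ (p - MvPolynomial.C (MvPolynomial.aeval (fun _ => (0 : k)) p)) ∈ J := by
    intro p
    induction p using MvPolynomial.induction_on with
    | C a => simp
    | add p q hp hq =>
      have := add_mem hp hq
      rw [← map_add] at this
      convert this using 2
      simp only [map_add]
      ring
    | mul_X p j _ =>
      simp only [map_mul, MvPolynomial.aeval_X, mul_zero, map_zero, sub_zero]
      exact Ideal.mul_mem_left _ _ (h j)
  intro p hp
  have := key p
  rw [mPoly, RingHom.mem_ker] at hp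
  rw [Ideal.mem_comap]
  have hp' : MvPolynomial.aeval (fun _ => (0 : k)) p = 0 := hp
  simpa [hp'] using this

/-- (Lemma `lemma:tau_mayor`.)  Let `φ` be an arc in the hypersurface `X = V(f)` through
the closed point with `φ(z_j) = u_j g'(t)` for units `u_j` and `g'` of `t`-adic order
`L ≥ 1`, whose projection `φ^{(d)}` to `S` is diagonal-generic for `G_X^{(d)}`, i.e.
`ord(G^{(1)}_{X_0,φ^{(d)}}) = L · ord(G_X^{(d)})`.  If `ord(φ) = ord_t(φ(x))`, then
`r_{X,φ}/ord(φ) = ord(G_X^{(d)}) = 1`. -/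
theorem diagonal_generic_arc_with_small_x_order
    (k : Type) [Field k] [CharZero k] (d : ℕ) (hd : 1 ≤ d)
    (S : Type) [CommRing S] [IsDomain S] [Algebra (MvPolynomial (Fin d) k) S]
    [Algebra k S] [IsScalarTower k (MvPolynomial (Fin d) k) S] [IsSLoc k d S]
    (D : Fin d → Derivation k S S)
    (hD : ∀ i j : Fin d, D j (zvar k d S i) = if i = j then 1 else 0)
    (b : ℕ) (hb : 2 ≤ b) (Bc : ℕ → S)
    (hmem : ∀ i ≤ b - 2, Bc i ∈ (mS k d S) ^ (b - i))
    (hnz : ∃ i ≤ b - 2, Bc i ≠ 0)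
    (K : Type) [Field K] [Algebra k K]
    (φ : Polynomial S →ₐ[k] PowerSeries K) (hφ : IsHypArc k d S b Bc φ)
    (L : ℕ) (hL : 1 ≤ L) (g' : PowerSeries K) (hg0 : g' ≠ 0) (hgL : tOrd g' = L)
    (u : Fin d → PowerSeries K) (hu : ∀ j, IsUnit (u j))
    (hφz : ∀ j, φ (Polynomial.C (zvar k d S j)) = u j * g')
    (hgen : reesOrder (tId K)
        (arcImage (fun s : S => φ (Polynomial.C s)) (hypElim k d S D b Bc)) =
      (L : ℝ≥0∞) * reesOrder (mS k d S) (hypElim k d S D b Bc))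
    (hordx : hypArcOrd k d S φ = tOrd (φ (Polynomial.X : Polynomial S))) :
    reesOrder (tId K) (hypContact k d S D b Bc φ) / (hypArcOrd k d S φ : ℝ≥0∞) =
        reesOrder (mS k d S) (hypElim k d S D b Bc) ∧
      reesOrder (mS k d S) (hypElim k d S D b Bc) = 1 := by
  haveI : IsNoetherianRing S := IsLocalization.isNoetherianRing (mPoly k d).primeCompl S inferInstance
  obtain ⟨hf0, -, -, hx0, hz0⟩ := hφ
  have hmtop : mS k d S ≠ ⊤ := by
    haveI : IsLocalRing S := IsLocalization.AtPrime.isLocalRing S (mPoly k d)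
    rw [mS, IsLocalization.AtPrime.map_eq_maximalIdeal (mPoly k d) S]
    exact Ideal.IsPrime.ne_top'
  have hGle : hypElim k d S D b Bc ≤ reesAlgebra (mS k d S) := by
    refine sInf_le ⟨?_, graded_rees _, diffClosed_rees _ _⟩
    rintro p ⟨i, hi, rfl⟩
    exact (CX_mem_rees _ _ _).2 (hmem i hi)
  have hGgen : ∀ i ≤ b - 2,
      (Polynomial.C (Bc i) * Polynomial.X ^ (b - i) : Polynomial S) ∈ hypElim k d S D b Bc := by
    intro i hi
    refine Algebra.mem_sInf.2 ?_
    intro G hG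
    exact hG.1 ⟨i, hi, rfl⟩
  have h1 : 1 ≤ reesOrder (mS k d S) (hypElim k d S D b Bc) := by
    have := le_reesOrder (mS k d S) hmtop 1 (hypElim k d S D b Bc) (by rwa [pow_one])
    simpa using this
  have hmap : ∀ s ∈ mS k d S, φ (Polynomial.C s) ∈ tId K ^ L := by
    let ψ : S →+* PowerSeries K := (φ : Polynomial S →+* PowerSeries K).comp Polynomial.C
    have : mS k d S ≤ (tId K ^ L).comap ψ := by
      rw [mS, Ideal.map_le_iff_le_comap, Ideal.comap_comap]
      apply mPoly_le
      intro j
      have h2 : g' ∈ tId K ^ L := by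
        rw [mem_tId_pow, ← le_tOrd_iff hg0, hgL]
      have h3 := Ideal.mul_mem_left _ (u j) h2
      rw [← hφz j] at h3
      exact h3
    exact fun s hs => this hs
  have hmap' : ∀ l : ℕ, ∀ s ∈ mS k d S ^ l, φ (Polynomial.C s) ∈ (tId K ^ L) ^ l := by
    let ψ : S →+* PowerSeries K := (φ : Polynomial S →+* PowerSeries K).comp Polynomial.C
    intro l s hs
    have h2 : (mS k d S).map ψ ≤ tId K ^ L := by
      rw [Ideal.map_le_iff_le_comap]; exact hmap
    have h3 : ψ s ∈ ((mS k d S) ^ l).map ψ := Ideal.mem_map_of_mem ψ hs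
    rw [Ideal.map_pow] at h3
    exact Ideal.pow_right_mono h2 l h3
  set a := tOrd (φ (Polynomial.X : Polynomial S)) with ha
  have haL : a ≤ L := by
    rw [← hordx]
    refine Nat.sInf_le (Set.mem_insert_of_mem _ ⟨⟨0, hd⟩, ?_⟩)
    apply eq_of_forall_le_iff
    intro n
    show n ≤ tOrd _ ↔ _
    rw [le_tOrd_iff (hz0 _), hφz, (hu _).dvd_mul_left, ← le_tOrd_iff hg0, hgL]
  obtain ⟨i, hi, hBi0, hBi⟩ : ∃ i ≤ b - 2, φ (Polynomial.C (Bc i)) ≠ 0 ∧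
      tOrd (φ (Polynomial.C (Bc i))) ≤ a * (b - i) := by
    by_contra! hcon
    have hdiv : ∀ i ≤ b - 2,
        (PowerSeries.X : PowerSeries K) ^ (a * (b - i) + 1) ∣ φ (Polynomial.C (Bc i)) := by
      intro i hi
      by_cases h0 : φ (Polynomial.C (Bc i)) = 0
      · rw [h0]; exact dvd_zero _
      · rw [← le_tOrd_iff h0]
        exact hcon i hi h0
    have hxa : (PowerSeries.X : PowerSeries K) ^ a ∣ φ Polynomial.X :=
      (le_tOrd_iff hx0 a).1 le_rfl
    have hxa' : ¬ (PowerSeries.X : PowerSeries K) ^ (a + 1) ∣ φ Polynomial.X := by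
      rw [← le_tOrd_iff hx0]
      omega
    have hpow : (PowerSeries.X : PowerSeries K) ^ (a * b + 1) ∣ φ Polynomial.X ^ b := by
      rw [minPolyOf, map_add, map_pow, map_sum] at hf0
      rw [eq_neg_of_add_eq_zero_left hf0, dvd_neg]
      apply Finset.dvd_sum
      intro i hi
      rw [Finset.mem_range] at hi
      rw [map_mul, map_pow]
      have he : a * b + 1 = (a * (b - i) + 1) + a * i := by
        have : b = (b - i) + i := by omega
        conv_lhs => rw [this]
        ring
      rw [he, pow_add, pow_mul _ a i]
      exact mul_dvd_mul (hdiv i (by omega)) (pow_dvd_pow_of_dvd hxa i)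
    obtain ⟨v, hv⟩ := hxa
    rw [hv, mul_pow, ← pow_mul, pow_succ] at hpow
    have hX0 : (PowerSeries.X : PowerSeries K) ^ (a * b) ≠ 0 :=
      pow_ne_zero _ PowerSeries.X_ne_zero
    have hXv := PowerSeries.X_prime.dvd_of_dvd_pow ((mul_dvd_mul_iff_left hX0).1 hpow)
    apply hxa'
    rw [hv, pow_succ]
    exact mul_dvd_mul_left _ hXv
  have hbi : 1 ≤ b - i := by omega
  have haL' : L ≤ a := by
    have h2 := hmap' _ _ (hmem i hi)
    rw [← pow_mul, mem_tId_pow, ← le_tOrd_iff hBi0] at h2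
    exact Nat.le_of_mul_le_mul_right (h2.trans hBi) hbi
  have haeq : a = L := le_antisymm haL haL'
  have hL0 : (L : ℝ≥0∞) ≠ 0 := by simp; omega
  have hLtop : (L : ℝ≥0∞) ≠ ⊤ := by simp
  have h2 : reesOrder (mS k d S) (hypElim k d S D b Bc) ≤ 1 := by
    have h3 : (L : ℝ≥0∞) * reesOrder (mS k d S) (hypElim k d S D b Bc) ≤ L * 1 := by
      rw [← hgen, mul_one]
      have h4 : (tOrd (φ (Polynomial.C (Bc i))) : ℝ≥0∞) / ((b - i : ℕ) : ℝ≥0∞) ≤ L := by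
        apply ENNReal.div_le_of_le_mul
        rw [haeq] at hBi
        exact_mod_cast hBi
      refine le_trans (sInf_le ?_) h4
      exact ⟨_, b - i, hBi0, hbi,
        Algebra.subset_adjoin ⟨Bc i, b - i, hGgen i hi, hBi0, rfl⟩, rfl⟩
    exact (ENNReal.mul_le_mul_iff_right hL0 hLtop).1 h3
  have h3 : reesOrder (mS k d S) (hypElim k d S D b Bc) = 1 := le_antisymm h2 h1
  refine ⟨?_, h3⟩
  have h4 : reesOrder (tId K) (hypContact k d S D b Bc φ) = L := by
    apply le_antisymm
    · have hXa0 : (PowerSeries.X : PowerSeries K) ^ a ≠ 0 := pow_ne_zero _ PowerSeries.X_ne_zero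
      have h5 : tOrd ((PowerSeries.X : PowerSeries K) ^ a) = L := by
        rw [← haeq]
        apply eq_of_forall_le_iff
        intro n
        rw [le_tOrd_iff hXa0]
        exact pow_dvd_pow_iff PowerSeries.X_ne_zero PowerSeries.X_prime.not_unit
      refine sInf_le ⟨(PowerSeries.X : PowerSeries K) ^ a, 1, hXa0, le_rfl, ?_, ?_⟩
      · rw [pow_one]
        exact Algebra.subset_adjoin (Set.mem_insert _ _)
      · change _ = (tOrd ((PowerSeries.X : PowerSeries K) ^ a) : ℝ≥0∞) / _
        rw [h5]; simp
    · apply le_reesOrder _ (tId_ne_top K)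
      refine Algebra.adjoin_le ?_
      rintro p (rfl | ⟨g, l, hg, -, rfl⟩)
      · have h6 := (CX_mem_rees (tId K ^ L) ((PowerSeries.X : PowerSeries K) ^ a) 1).2 (by
          rw [pow_one, mem_tId_pow, haeq])
        rw [pow_one] at h6
        exact h6
      · exact (CX_mem_rees _ _ _).2 (hmap' l g ((CX_mem_rees _ _ _).1 (hGle hg)))
  rw [h4, h3, hordx, haeq]
  exact ENNReal.div_self hL0 hLtop

end NashMult
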